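/- (Semiparallelogram law) For all m×m positive definite complex matrices A, B, C, writing M = A # B, one has δ²(A,B) + 4δ²(C,M) ≤ 2δ²(C,A) + 2δ²(C,B). -/

import Mathlib

/-!
Write `A = T e^{-K} Tᴴ`, `B = T e^K Tᴴ`, `C = T e^L Tᴴ` with `T` invertible and `K`, `L` Hermitian,
so that `A # B = T Tᴴ`. By the congruence invariance of `δ` one may take `T = 1`. Along the line
`t ↦ e^{tX}` the distance `δ` is the Frobenius distance of logarithms, and for arbitrary Hermitian
`H`, `K` the exponential metric increasing inequality `‖H - K‖ ≤ δ(e^H, e^K)` holds. The claim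
is therefore a consequence of the parallelogram identity for the Frobenius norm, applied to `L` and
`K`.

For the metric increasing inequality, compare entries in the eigenbases of `H` and `K`: the bound
`|x| ≤ |2 sinh (x / 2)|` gives `‖H - K‖ ≤ ‖e^{-H/2} e^{K/2} - e^{H/2} e^{-K/2}‖`. If `e^H = S Sᴴ`
and `e^K = T Tᴴ`, the polar decompositions of `S` and `T` turn the right-hand side into
`‖S⁻¹ T - (T⁻¹ S)ᴴ‖`. For two points at parameter distance `d` on the geodesic `t ↦ T e^{tX} Tᴴ`
this is `‖e^{dX/2} - e^{-dX/2}‖ = d ‖X‖ + o(d)`, so subdividing the geodesic from `e^H` to `e^K`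
turns this local estimate into the global one.
-/

open Matrix
open scoped ComplexOrder

noncomputable def matFun {m : ℕ} (f : ℝ → ℝ) (A : Matrix (Fin m) (Fin m) ℂ) :
    Matrix (Fin m) (Fin m) ℂ :=
  if hA : A.IsHermitian then
    (hA.eigenvectorUnitary : Matrix (Fin m) (Fin m) ℂ) *
      Matrix.diagonal (fun i => (f (hA.eigenvalues i) : ℂ)) *
      (star (hA.eigenvectorUnitary : Matrix (Fin m) (Fin m) ℂ))
  else 0

/-- The unique positive definite square root of a positive definite matrix
(realized via the spectral decomposition). -/
noncomputable def msqrt {m : ℕ} (A : Matrix (Fin m) (Fin m) ℂ) : Matrix (Fin m) (Fin m) ℂ :=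
  matFun Real.sqrt A

/-- The logarithm of a positive definite matrix: the unique Hermitian `L` with `exp L = A`. -/
noncomputable def mlog {m : ℕ} (A : Matrix (Fin m) (Fin m) ℂ) : Matrix (Fin m) (Fin m) ℂ :=
  matFun Real.log A

/-- The real power `A ^ t` of a positive definite matrix, via the spectral decomposition. -/
noncomputable def mpow {m : ℕ} (A : Matrix (Fin m) (Fin m) ℂ) (t : ℝ) : Matrix (Fin m) (Fin m) ℂ :=
  matFun (fun x => x ^ t) A

/-- The matrix geometric mean `A # B`. -/
noncomputable def gmean {m : ℕ} (A B : Matrix (Fin m) (Fin m) ℂ) : Matrix (Fin m) (Fin m) ℂ :=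
  msqrt A * msqrt ((msqrt A)⁻¹ * B * (msqrt A)⁻¹) * msqrt A

/-- The weighted geometric mean `A #_t B`. -/
noncomputable def wgmean {m : ℕ} (A B : Matrix (Fin m) (Fin m) ℂ) (t : ℝ) :
    Matrix (Fin m) (Fin m) ℂ :=
  msqrt A * mpow ((msqrt A)⁻¹ * B * (msqrt A)⁻¹) t * msqrt A

/-- The Frobenius (Hilbert–Schmidt) norm `‖X‖₂ = (Tr(X*X))^{1/2}`. -/
noncomputable def fnorm {m : ℕ} (X : Matrix (Fin m) (Fin m) ℂ) : ℝ :=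
  Real.sqrt ((Xᴴ * X).trace.re)

/-- The Riemannian metric `δ(A,B) = ‖log(A^{-1/2} B A^{-1/2})‖₂`. -/
noncomputable def rdist {m : ℕ} (A B : Matrix (Fin m) (Fin m) ℂ) : ℝ :=
  fnorm (mlog ((msqrt A)⁻¹ * B * (msqrt A)⁻¹))

/-- The Loewner order: `A ≤ B` iff `B - A` is positive semidefinite. -/
def Loewner {m : ℕ} (A B : Matrix (Fin m) (Fin m) ℂ) : Prop :=
  (B - A).PosSemidef

open NormedSpace (exp)
open Filter Topology

section MatrixExponential

variable {n 𝕜 : Type*} [Fintype n] [DecidableEq n] [RCLike 𝕜] {A B H T W X : Matrix n n 𝕜}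

lemma exp_mul_mul_conjTranspose_of_mem_unitaryGroup (hW : W ∈ unitaryGroup n 𝕜)
    (X : Matrix n n 𝕜) : exp (W * X * Wᴴ) = W * exp X * Wᴴ := by
  have hWinv : W⁻¹ = Wᴴ := inv_eq_left_inv (mem_unitaryGroup_iff'.1 hW)
  rw [← hWinv]
  exact exp_conj W X (.of_mul_eq_one _ (mem_unitaryGroup_iff.1 hW))

lemma exp_add_smul (s t : ℝ) (X : Matrix n n 𝕜) :
    exp ((s + t) • X) = exp (s • X) * exp (t • X) := by
  rw [add_smul, exp_add_of_commute]
  exact ((Commute.refl X).smul_left s).smul_right t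

lemma inv_exp_smul (t : ℝ) (X : Matrix n n 𝕜) : (exp (t • X))⁻¹ = exp (-t • X) := by
  rw [neg_smul, exp_neg]

lemma conjTranspose_exp_smul (hX : X.IsHermitian) (t : ℝ) : (exp (t • X))ᴴ = exp (t • X) := by
  rw [← exp_conjTranspose, conjTranspose_smul, hX.eq, star_trivial]

lemma exp_eq_cfc (hH : H.IsHermitian) : exp H = cfc Real.exp H := by
  conv_lhs => rw [hH.spectral_theorem]
  rw [hH.cfc_eq, IsHermitian.cfc, Unitary.conjStarAlgAut_apply, Unitary.conjStarAlgAut_apply,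
    star_eq_conjTranspose, exp_mul_mul_conjTranspose_of_mem_unitaryGroup hH.eigenvectorUnitary.2,
    exp_diagonal]
  have hdiag (i : n) : exp (RCLike.ofReal (hH.eigenvalues i) : 𝕜) =
      RCLike.ofReal (Real.exp (hH.eigenvalues i)) := by
    rw [Real.exp_eq_exp_ℝ]
    exact (NormedSpace.algebraMap_exp_comm (𝔸 := 𝕜) _).symm
  congr 3
  ext i
  rw [Pi.coe_exp]
  exact hdiag i

lemma exp_smul_eq_cfc (hH : H.IsHermitian) (t : ℝ) :
    exp (t • H) = cfc (fun x ↦ Real.exp (t * x)) H := by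
  have htH : (t • H).IsHermitian := IsSelfAdjoint.smul (.all t) hH
  rw [exp_eq_cfc htH]
  exact (cfc_comp_smul t Real.exp H (ha := hH)).symm

lemma cfc_exp_eq_cfc_comp (hH : H.IsHermitian) (f : ℝ → ℝ) :
    cfc f (exp H) = cfc (fun x ↦ f (Real.exp x)) H := by
  rw [exp_eq_cfc hH, ← cfc_comp' f Real.exp H (H.finite_real_spectrum.image _ |>.continuousOn f)]

lemma cfc_log_exp (hH : H.IsHermitian) : cfc Real.log (exp H) = H := by
  simp only [cfc_exp_eq_cfc_comp hH, Real.log_exp]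
  exact cfc_id' ℝ H

lemma cfc_sqrt_exp (hH : H.IsHermitian) : cfc Real.sqrt (exp H) = exp ((1 / 2 : ℝ) • H) := by
  simp only [cfc_exp_eq_cfc_comp hH, exp_smul_eq_cfc hH, ← Real.exp_half, one_div_mul_eq_div]

lemma exp_cfc_log (hA : A.PosDef) : exp (cfc Real.log A) = A := by
  have hlog : ContinuousOn Real.log (spectrum ℝ A) := A.finite_real_spectrum.continuousOn _
  have hA' : IsSelfAdjoint A := hA.1
  have hlogA : (cfc Real.log A).IsHermitian := cfc_predicate _ _
  have hexp_log : (spectrum ℝ A).EqOn (fun x ↦ Real.exp (Real.log x)) id := by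
    rw [hA.1.spectrum_real_eq_range_eigenvalues]
    rintro _ ⟨i, rfl⟩
    exact Real.exp_log (hA.eigenvalues_pos i)
  rw [exp_eq_cfc hlogA, ← cfc_comp' Real.exp Real.log A (hf := hlog) (ha := hA'),
    cfc_congr hexp_log, cfc_id ℝ A hA']

lemma exists_isHermitian_exp_eq (hA : A.PosDef) : ∃ H : Matrix n n 𝕜, H.IsHermitian ∧ exp H = A :=
  ⟨cfc Real.log A, cfc_predicate _ _, exp_cfc_log hA⟩

lemma exp_half_smul_mul_self (H : Matrix n n 𝕜) :
    exp ((1 / 2 : ℝ) • H) * exp ((1 / 2 : ℝ) • H) = exp H := by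
  rw [← exp_add_smul, add_halves, one_smul]

lemma posDef_mul_conjTranspose_self (hT : IsUnit T) : (T * Tᴴ).PosDef :=
  .mul_conjTranspose_self T (vecMul_injective_iff_isUnit.2 hT)

lemma posDef_exp (hH : H.IsHermitian) : (exp H).PosDef := by
  rw [← exp_half_smul_mul_self]
  nth_rw 2 [← conjTranspose_exp_smul hH]
  exact posDef_mul_conjTranspose_self (isUnit_exp _)

lemma exists_eq_exp_half_smul_mul_unitary (hT : IsUnit T) :
    ∃ H : Matrix n n 𝕜, H.IsHermitian ∧ T * Tᴴ = exp H ∧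
      ∃ W ∈ unitaryGroup n 𝕜, T = exp ((1 / 2 : ℝ) • H) * W := by
  obtain ⟨H, hH, hTH⟩ := exists_isHermitian_exp_eq (posDef_mul_conjTranspose_self hT)
  refine ⟨H, hH, hTH.symm, exp (-(1 / 2 : ℝ) • H) * T, mem_unitaryGroup_iff.2 ?_, ?_⟩
  · calc exp (-(1 / 2 : ℝ) • H) * T * star (exp (-(1 / 2 : ℝ) • H) * T)
        = exp (-(1 / 2 : ℝ) • H) * (T * Tᴴ) * exp (-(1 / 2 : ℝ) • H) := by
          rw [star_eq_conjTranspose, conjTranspose_mul, conjTranspose_exp_smul hH]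
          simp only [Matrix.mul_assoc]
      _ = exp ((-(1 / 2) + 1 + -(1 / 2) : ℝ) • H) := by
          rw [← hTH, exp_add_smul, exp_add_smul, one_smul]
      _ = 1 := by norm_num
  · rw [← Matrix.mul_assoc, ← exp_add_smul, add_neg_cancel, zero_smul, NormedSpace.exp_zero,
      Matrix.one_mul]

lemma inv_exp_half_smul_conj (hH : H.IsHermitian) (hW : W ∈ unitaryGroup n 𝕜)
    (X : Matrix n n 𝕜) :
    (exp ((1 / 2 : ℝ) • H))⁻¹ * (exp ((1 / 2 : ℝ) • H) * W * exp X *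
      (exp ((1 / 2 : ℝ) • H) * W)ᴴ) * (exp ((1 / 2 : ℝ) • H))⁻¹ = exp (W * X * Wᴴ) := by
  have hdet := (isUnit_iff_isUnit_det _).1 (isUnit_exp ((1 / 2 : ℝ) • H))
  rw [exp_mul_mul_conjTranspose_of_mem_unitaryGroup hW, conjTranspose_mul,
    conjTranspose_exp_smul hH]
  simp only [Matrix.mul_assoc, mul_nonsing_inv _ hdet, nonsing_inv_mul_cancel_left _ _ hdet,
    Matrix.mul_one]

lemma exists_isHermitian_mul_exp_mul_conjTranspose_eq (hT : IsUnit T) (hA : A.PosDef) :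
    ∃ L : Matrix n n 𝕜, L.IsHermitian ∧ T * exp L * Tᴴ = A := by
  have hTdet : IsUnit T.det := (isUnit_iff_isUnit_det T).1 hT
  obtain ⟨L, hL, hexpL⟩ := exists_isHermitian_exp_eq
    ((IsUnit.posDef_star_right_conjugate_iff (isUnit_nonsing_inv_iff.2 hT)).2 hA)
  refine ⟨L, hL, ?_⟩
  rw [hexpL, star_eq_conjTranspose, conjTranspose_nonsing_inv, Matrix.mul_assoc T⁻¹,
    mul_nonsing_inv_cancel_left _ _ hTdet,
    nonsing_inv_mul_cancel_right _ _ ((isUnit_iff_isUnit_det Tᴴ).1 hT.star)]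

lemma exists_mul_conjTranspose_eq_and_mul_exp_mul_conjTranspose_eq (hA : A.PosDef)
    (hB : B.PosDef) : ∃ T X : Matrix n n 𝕜,
      IsUnit T ∧ X.IsHermitian ∧ T * Tᴴ = A ∧ T * exp X * Tᴴ = B := by
  obtain ⟨H, hH, rfl⟩ := exists_isHermitian_exp_eq hA
  have hT : IsUnit (exp ((1 / 2 : ℝ) • H)) := isUnit_exp _
  obtain ⟨X, hX, hTX⟩ := exists_isHermitian_mul_exp_mul_conjTranspose_eq hT hB
  exact ⟨_, X, hT, hX, by rw [conjTranspose_exp_smul hH, exp_half_smul_mul_self], hTX⟩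

end MatrixExponential

lemma dist_le_of_tendsto_slope {α : Type*} [PseudoMetricSpace α] {γ : ℝ → α} {E : ℝ → ℝ} {c : ℝ}
    (hdist : ∀ s t, dist (γ s) (γ t) ≤ E (t - s))
    (hE : Tendsto (fun d ↦ d⁻¹ * E d) (𝓝[>] 0) (𝓝 c)) : dist (γ 0) (γ 1) ≤ c := by
  have hstep : Tendsto (fun N : ℕ ↦ ((N : ℝ) + 1)⁻¹) atTop (𝓝[>] 0) :=
    tendsto_nhdsWithin_iff.2 ⟨by simpa using tendsto_one_div_add_atTop_nhds_zero_nat (𝕜 := ℝ),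
      .of_forall fun N ↦ by simp only [Set.mem_Ioi]; positivity⟩
  refine ge_of_tendsto' (hE.comp hstep) fun N ↦ ?_
  have hsubdiv := dist_le_range_sum_dist (fun k : ℕ ↦ γ (k * ((N : ℝ) + 1)⁻¹)) (N + 1)
  calc dist (γ 0) (γ 1)
      ≤ ∑ k ∈ Finset.range (N + 1),
          dist (γ (k * ((N : ℝ) + 1)⁻¹)) (γ ((k + 1 : ℕ) * ((N : ℝ) + 1)⁻¹)) := by
        have hlast : ((N : ℝ) + 1) * ((N : ℝ) + 1)⁻¹ = 1 := mul_inv_cancel₀ (by positivity)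
        simpa [hlast] using hsubdiv
    _ ≤ ∑ _k ∈ Finset.range (N + 1), E ((N : ℝ) + 1)⁻¹ := by
        gcongr with k
        refine (hdist _ _).trans_eq (congrArg E ?_)
        push_cast
        ring
    _ = (((N : ℝ) + 1)⁻¹)⁻¹ * E ((N : ℝ) + 1)⁻¹ := by simp

lemma abs_le_abs_exp_half_sub_exp_neg_half (x : ℝ) :
    |x| ≤ |Real.exp (x / 2) - Real.exp (-(x / 2))| := by
  have hsinh : |x / 2| ≤ |Real.sinh (x / 2)| := by
    rw [Real.abs_sinh]
    exact Real.self_le_sinh_iff.2 (abs_nonneg _)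
  rw [Real.sinh_eq, abs_div, abs_div] at hsinh
  simpa using (div_le_div_iff_of_pos_right (by norm_num)).1 hsinh

section Frobenius

open scoped Matrix.Norms.Frobenius

variable {m n 𝕜 : Type*} [Fintype m] [Fintype n] [RCLike 𝕜]

lemma frobenius_norm_sq_eq_re_trace (X : Matrix m n 𝕜) :
    ‖X‖ ^ 2 = RCLike.re (Xᴴ * X).trace := by
  rw [frobenius_norm_def, ← Real.sqrt_eq_rpow, Real.sq_sqrt (by positivity), Finset.sum_comm]
  simp only [trace, diag_apply, mul_apply, conjTranspose_apply, map_sum, Real.rpow_two,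
    RCLike.star_def, RCLike.conj_mul, ← RCLike.ofReal_pow, RCLike.ofReal_re]

lemma frobenius_parallelogram_law (X Y : Matrix m n 𝕜) :
    ‖X + Y‖ ^ 2 + ‖X - Y‖ ^ 2 = 2 * ‖X‖ ^ 2 + 2 * ‖Y‖ ^ 2 := by
  simp only [frobenius_norm_sq_eq_re_trace, conjTranspose_add, conjTranspose_sub,
    Matrix.add_mul, Matrix.mul_add, Matrix.sub_mul, Matrix.mul_sub, trace_add, trace_sub, map_add,
    map_sub]
  ring

lemma frobenius_norm_le_of_forall_norm_apply_le {X Y : Matrix m n 𝕜}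
    (h : ∀ i j, ‖X i j‖ ≤ ‖Y i j‖) : ‖X‖ ≤ ‖Y‖ := by
  rw [frobenius_norm_def, frobenius_norm_def]
  gcongr with i _ j
  exact h i j

variable [DecidableEq n] {H K S T U W X : Matrix n n 𝕜}

lemma frobenius_norm_mul_of_mem_unitaryGroup (hU : U ∈ unitaryGroup n 𝕜) (X : Matrix n n 𝕜) :
    ‖U * X‖ = ‖X‖ := by
  rw [← sq_eq_sq₀ (norm_nonneg _) (norm_nonneg _), frobenius_norm_sq_eq_re_trace,
    frobenius_norm_sq_eq_re_trace, conjTranspose_mul, Matrix.mul_assoc, ← Matrix.mul_assoc Uᴴ,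
    ← star_eq_conjTranspose U, mem_unitaryGroup_iff'.1 hU, Matrix.one_mul]

lemma frobenius_norm_mul_mul_of_mem_unitaryGroup (hU : U ∈ unitaryGroup n 𝕜)
    (hW : W ∈ unitaryGroup n 𝕜) (X : Matrix n n 𝕜) : ‖U * X * W‖ = ‖X‖ := by
  rw [← frobenius_norm_conjTranspose, conjTranspose_mul, ← star_eq_conjTranspose W,
    frobenius_norm_mul_of_mem_unitaryGroup (Unitary.star_mem hW), frobenius_norm_conjTranspose,
    frobenius_norm_mul_of_mem_unitaryGroup hU]

lemma conjTranspose_eigenvectorUnitary_mul_cfc_mul_cfc_mul_apply (hH : H.IsHermitian)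
    (hK : K.IsHermitian) (f g : ℝ → ℝ) (i j : n) :
    ((hH.eigenvectorUnitary : Matrix n n 𝕜)ᴴ * (cfc f H * cfc g K) *
        (hK.eigenvectorUnitary : Matrix n n 𝕜)) i j =
      ((f (hH.eigenvalues i) * g (hK.eigenvalues j) : ℝ) : 𝕜) *
        ((hH.eigenvectorUnitary : Matrix n n 𝕜)ᴴ * (hK.eigenvectorUnitary : Matrix n n 𝕜)) i j := by
  set U := (hH.eigenvectorUnitary : Matrix n n 𝕜)
  set V := (hK.eigenvectorUnitary : Matrix n n 𝕜)
  have hU : Uᴴ * U = 1 := mem_unitaryGroup_iff'.1 hH.eigenvectorUnitary.2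
  have hV : Vᴴ * V = 1 := mem_unitaryGroup_iff'.1 hK.eigenvectorUnitary.2
  have hf : cfc f H = U * diagonal (RCLike.ofReal ∘ f ∘ hH.eigenvalues) * Uᴴ := by
    rw [hH.cfc_eq]; rfl
  have hg : cfc g K = V * diagonal (RCLike.ofReal ∘ g ∘ hK.eigenvalues) * Vᴴ := by
    rw [hK.cfc_eq]; rfl
  have hprod : Uᴴ * (cfc f H * cfc g K) * V =
      diagonal (RCLike.ofReal ∘ f ∘ hH.eigenvalues) * (Uᴴ * V) *
        diagonal (RCLike.ofReal ∘ g ∘ hK.eigenvalues) := by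
    rw [hf, hg]
    simp only [Matrix.mul_assoc, hV, Matrix.mul_one]
    simp only [← Matrix.mul_assoc, hU, Matrix.one_mul]
  rw [hprod, mul_diagonal, diagonal_mul]
  simp only [Function.comp_apply, RCLike.ofReal_mul]
  ring

lemma frobenius_norm_sub_le_norm_exp_mul_exp_sub (hH : H.IsHermitian) (hK : K.IsHermitian) :
    ‖H - K‖ ≤ ‖exp (-(1 / 2 : ℝ) • H) * exp ((1 / 2 : ℝ) • K) -
      exp ((1 / 2 : ℝ) • H) * exp (-(1 / 2 : ℝ) • K)‖ := by
  have hH' : IsSelfAdjoint H := hH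
  have hK' : IsSelfAdjoint K := hK
  have hHK : H - K =
      cfc (id : ℝ → ℝ) H * cfc (1 : ℝ → ℝ) K - cfc (1 : ℝ → ℝ) H * cfc (id : ℝ → ℝ) K := by
    rw [cfc_id ℝ H hH', cfc_id ℝ K hK', cfc_one ℝ H hH', cfc_one ℝ K hK', mul_one, one_mul]
  have hunitary := frobenius_norm_mul_mul_of_mem_unitaryGroup
    (Unitary.star_mem hH.eigenvectorUnitary.2) hK.eigenvectorUnitary.2
  rw [star_eq_conjTranspose] at hunitary
  rw [hHK, ← hunitary, ← hunitary (exp _ * _ - _)]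
  -- With `w` the transition matrix between the eigenbases and `hᵢ`, `kⱼ` the eigenvalues, the
  -- entries to compare are `w i j * (hᵢ - kⱼ)` and `-2 * w i j * sinh ((hᵢ - kⱼ) / 2)`.
  refine frobenius_norm_le_of_forall_norm_apply_le fun i j ↦ ?_
  simp only [exp_smul_eq_cfc hH, exp_smul_eq_cfc hK, Matrix.mul_sub, Matrix.sub_mul,
    Matrix.sub_apply, conjTranspose_eigenvectorUnitary_mul_cfc_mul_cfc_mul_apply hH hK]
  simp only [← sub_mul, ← RCLike.ofReal_sub, norm_mul, RCLike.norm_ofReal, ← Real.exp_add]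
  refine mul_le_mul_of_nonneg_right ?_ (norm_nonneg _)
  rw [abs_sub_comm (Real.exp _)]
  have hpos (x y : ℝ) : 1 / 2 * x + -(1 / 2) * y = (x - y) / 2 := by ring
  have hneg (x y : ℝ) : -(1 / 2) * x + 1 / 2 * y = -((x - y) / 2) := by ring
  simpa only [id, Pi.one_apply, mul_one, one_mul, hpos, hneg] using
    abs_le_abs_exp_half_sub_exp_neg_half (hH.eigenvalues i - hK.eigenvalues j)

lemma frobenius_norm_log_sub_log_le (hS : IsUnit S) (hT : IsUnit T) :
    ‖cfc Real.log (S * Sᴴ) - cfc Real.log (T * Tᴴ)‖ ≤ ‖S⁻¹ * T - (T⁻¹ * S)ᴴ‖ := by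
  obtain ⟨H, hH, hSH, U, hU, rfl⟩ := exists_eq_exp_half_smul_mul_unitary hS
  obtain ⟨K, hK, hTK, W, hW, rfl⟩ := exists_eq_exp_half_smul_mul_unitary hT
  have hUinv : U⁻¹ = Uᴴ := inv_eq_left_inv (mem_unitaryGroup_iff'.1 hU)
  have hWinv : W⁻¹ = Wᴴ := inv_eq_left_inv (mem_unitaryGroup_iff'.1 hW)
  rw [hSH, hTK, cfc_log_exp hH, cfc_log_exp hK]
  refine (frobenius_norm_sub_le_norm_exp_mul_exp_sub hH hK).trans_eq ?_
  rw [← frobenius_norm_mul_mul_of_mem_unitaryGroup (Unitary.star_mem hU) hW]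
  simp only [star_eq_conjTranspose, Matrix.mul_inv_rev, inv_exp_smul, hUinv, hWinv,
    conjTranspose_mul, conjTranspose_exp_smul hH, conjTranspose_exp_smul hK,
    conjTranspose_conjTranspose, Matrix.mul_sub, Matrix.sub_mul, Matrix.mul_assoc]

lemma frobenius_norm_log_sub_log_exp_smul_le (hT : IsUnit T) (hX : X.IsHermitian) (s t : ℝ) :
    ‖cfc Real.log (T * exp (s • X) * (T * exp (s • X))ᴴ) -
        cfc Real.log (T * exp (t • X) * (T * exp (t • X))ᴴ)‖ ≤
      ‖exp ((t - s) • X) - exp (-(t - s) • X)‖ := by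
  have hinv (s t : ℝ) : (T * exp (s • X))⁻¹ * (T * exp (t • X)) = exp ((t - s) • X) := by
    rw [Matrix.mul_inv_rev, Matrix.mul_assoc, nonsing_inv_mul_cancel_left _ _
      ((isUnit_iff_isUnit_det T).1 hT), inv_exp_smul, ← exp_add_smul, neg_add_eq_sub]
  refine (frobenius_norm_log_sub_log_le (hT.mul (isUnit_exp _)) (hT.mul (isUnit_exp _))).trans_eq ?_
  rw [hinv, hinv, conjTranspose_exp_smul hX, neg_sub]

lemma tendsto_inv_mul_frobenius_norm_exp_sub_exp_neg (X : Matrix n n 𝕜) :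
    Tendsto (fun d : ℝ ↦ d⁻¹ * ‖exp (d • X) - exp (-d • X)‖) (𝓝[>] 0) (𝓝 ‖(2 : ℝ) • X‖) := by
  have hexp (Z : Matrix n n 𝕜) : HasDerivAt (fun d : ℝ ↦ exp (d • Z)) Z 0 := by
    have hderiv_exp := hasDerivAt_exp_smul_const Z (0 : ℝ)
    rw [zero_smul, NormedSpace.exp_zero, one_mul] at hderiv_exp
    exact hderiv_exp
  have hderiv : HasDerivAt (fun d : ℝ ↦ exp (d • X) - exp (-d • X)) ((2 : ℝ) • X) 0 := by
    have hsub := (hexp X).sub (hexp (-X))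
    simp only [smul_neg, ← neg_smul, sub_neg_eq_add, ← two_smul ℝ X] at hsub
    exact hsub
  refine hderiv.tendsto_slope_zero_right.norm.congr' ?_
  filter_upwards [self_mem_nhdsWithin] with d hd
  rw [norm_smul, Real.norm_of_nonneg (inv_nonneg.2 (le_of_lt hd))]
  simp

lemma frobenius_norm_log_sub_log_mul_exp_mul_le (hT : IsUnit T) (hX : X.IsHermitian) :
    ‖cfc Real.log (T * Tᴴ) - cfc Real.log (T * exp X * Tᴴ)‖ ≤ ‖X‖ := by
  set Y := (1 / 2 : ℝ) • X with hY
  have hYherm : Y.IsHermitian := IsSelfAdjoint.smul (.all _) hX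
  have hYX : (2 : ℝ) • Y = X := by rw [hY, smul_smul]; norm_num
  set γ : ℝ → Matrix n n 𝕜 := fun t ↦
    cfc Real.log (T * exp (t • Y) * (T * exp (t • Y))ᴴ)
  have hγ_zero : γ 0 = cfc Real.log (T * Tᴴ) := by simp [γ]
  have hγ_one : γ 1 = cfc Real.log (T * exp X * Tᴴ) := by
    simp only [γ]
    rw [conjTranspose_mul, conjTranspose_exp_smul hYherm, ← Matrix.mul_assoc,
      Matrix.mul_assoc T, ← exp_add_smul, one_add_one_eq_two, hYX]
  have hdist := dist_le_of_tendsto_slope (γ := γ)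
    (fun s t ↦ (dist_eq_norm _ _).trans_le (frobenius_norm_log_sub_log_exp_smul_le hT hYherm s t))
    (tendsto_inv_mul_frobenius_norm_exp_sub_exp_neg Y)
  rwa [hγ_zero, hγ_one, dist_eq_norm, hYX] at hdist

end Frobenius

section RiemannianDistance

open scoped Matrix.Norms.Frobenius

variable {m : ℕ} {A B H K L T X : Matrix (Fin m) (Fin m) ℂ}

lemma matFun_eq_cfc (f : ℝ → ℝ) (A : Matrix (Fin m) (Fin m) ℂ) : matFun f A = cfc f A := by
  unfold matFun
  split_ifs with hA
  · rw [hA.cfc_eq]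
    rfl
  · exact (cfc_apply_of_not_predicate _ hA).symm

lemma fnorm_eq_frobenius_norm (X : Matrix (Fin m) (Fin m) ℂ) : fnorm X = ‖X‖ := by
  rw [← Real.sqrt_sq (norm_nonneg X), frobenius_norm_sq_eq_re_trace]
  rfl

lemma mlog_exp (hH : H.IsHermitian) : mlog (exp H) = H := by
  rw [mlog, matFun_eq_cfc, cfc_log_exp hH]

lemma msqrt_exp (hH : H.IsHermitian) : msqrt (exp H) = exp ((1 / 2 : ℝ) • H) := by
  rw [msqrt, matFun_eq_cfc, cfc_sqrt_exp hH]

lemma rdist_mul_conjTranspose_mul_exp_mul (hT : IsUnit T) (hX : X.IsHermitian) :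
    rdist (T * Tᴴ) (T * exp X * Tᴴ) = ‖X‖ := by
  obtain ⟨H, hH, hTH, W, hW, rfl⟩ := exists_eq_exp_half_smul_mul_unitary hT
  rw [rdist, hTH, msqrt_exp hH, inv_exp_half_smul_conj hH hW,
    mlog_exp (isHermitian_mul_mul_conjTranspose W hX), fnorm_eq_frobenius_norm]
  exact frobenius_norm_mul_mul_of_mem_unitaryGroup hW (Unitary.star_mem hW) X

lemma gmean_mul_conjTranspose_mul_exp_mul (hT : IsUnit T) (hX : X.IsHermitian) :
    gmean (T * Tᴴ) (T * exp X * Tᴴ) = T * exp ((1 / 2 : ℝ) • X) * Tᴴ := by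
  obtain ⟨H, hH, hTH, W, hW, rfl⟩ := exists_eq_exp_half_smul_mul_unitary hT
  rw [gmean, hTH, msqrt_exp hH, inv_exp_half_smul_conj hH hW,
    msqrt_exp (isHermitian_mul_mul_conjTranspose W hX), ← Matrix.smul_mul, ← Matrix.mul_smul,
    exp_mul_mul_conjTranspose_of_mem_unitaryGroup hW, conjTranspose_mul, conjTranspose_exp_smul hH]
  simp only [Matrix.mul_assoc]

lemma rdist_mul_mul_conjTranspose (hT : IsUnit T) (hA : A.PosDef) (hB : B.PosDef) :
    rdist (T * A * Tᴴ) (T * B * Tᴴ) = rdist A B := by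
  obtain ⟨S, X, hS, hX, rfl, rfl⟩ :=
    exists_mul_conjTranspose_eq_and_mul_exp_mul_conjTranspose_eq hA hB
  rw [rdist_mul_conjTranspose_mul_exp_mul hS hX,
    ← rdist_mul_conjTranspose_mul_exp_mul (hT.mul hS) hX]
  simp only [conjTranspose_mul, Matrix.mul_assoc]

lemma rdist_exp_smul_exp_smul (hX : X.IsHermitian) (s t : ℝ) :
    rdist (exp (s • X)) (exp (t • X)) = |t - s| * ‖X‖ := by
  have hherm : ((t - s) • X).IsHermitian := IsSelfAdjoint.smul (.all _) hX
  have hrdist := rdist_mul_conjTranspose_mul_exp_mul (isUnit_exp ((s / 2) • X)) hherm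
  rwa [conjTranspose_exp_smul hX, ← exp_add_smul, ← exp_add_smul, ← exp_add_smul, add_halves,
    add_right_comm, add_halves, add_sub_cancel, norm_smul, Real.norm_eq_abs] at hrdist

lemma frobenius_norm_sub_le_rdist_exp_exp (hH : H.IsHermitian) (hK : K.IsHermitian) :
    ‖H - K‖ ≤ rdist (exp H) (exp K) := by
  obtain ⟨T, X, hT, hX, hTH, hTK⟩ :=
    exists_mul_conjTranspose_eq_and_mul_exp_mul_conjTranspose_eq (posDef_exp hH) (posDef_exp hK)
  have hlog := frobenius_norm_log_sub_log_mul_exp_mul_le hT hX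
  rwa [← rdist_mul_conjTranspose_mul_exp_mul hT hX, hTH, hTK, cfc_log_exp hH,
    cfc_log_exp hK] at hlog

lemma rdist_semiparallelogram_exp (hK : K.IsHermitian) (hL : L.IsHermitian) :
    rdist (exp (-K)) (exp K) ^ 2 + 4 * rdist (exp L) 1 ^ 2 ≤
      2 * rdist (exp L) (exp (-K)) ^ 2 + 2 * rdist (exp L) (exp K) ^ 2 := by
  have hKK : rdist (exp (-K)) (exp K) = 2 * ‖K‖ := by
    simpa [one_add_one_eq_two] using rdist_exp_smul_exp_smul hK (-1) 1
  have hL1 : rdist (exp L) 1 = ‖L‖ := by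
    simpa using rdist_exp_smul_exp_smul hL 1 0
  calc rdist (exp (-K)) (exp K) ^ 2 + 4 * rdist (exp L) 1 ^ 2
      = 2 * ‖L - -K‖ ^ 2 + 2 * ‖L - K‖ ^ 2 := by
        rw [hKK, hL1, sub_neg_eq_add]
        linear_combination -2 * frobenius_parallelogram_law L K
    _ ≤ 2 * rdist (exp L) (exp (-K)) ^ 2 + 2 * rdist (exp L) (exp K) ^ 2 := by
        gcongr
        · exact frobenius_norm_sub_le_rdist_exp_exp hL hK.neg
        · exact frobenius_norm_sub_le_rdist_exp_exp hL hK

lemma exists_mul_exp_neg_eq_and_mul_exp_eq_and_eq_gmean (hA : A.PosDef) (hB : B.PosDef) :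
    ∃ T K : Matrix (Fin m) (Fin m) ℂ, IsUnit T ∧ K.IsHermitian ∧
      T * exp (-K) * Tᴴ = A ∧ T * exp K * Tᴴ = B ∧ T * 1 * Tᴴ = gmean A B := by
  obtain ⟨S, X, hS, hX, rfl, rfl⟩ :=
    exists_mul_conjTranspose_eq_and_mul_exp_mul_conjTranspose_eq hA hB
  have hconj (r : ℝ) : S * exp ((1 / 4 : ℝ) • X) * exp (r • X) * (S * exp ((1 / 4 : ℝ) • X))ᴴ =
      S * exp ((1 / 4 + r + 1 / 4) • X) * Sᴴ := by
    rw [conjTranspose_mul, conjTranspose_exp_smul hX, exp_add_smul, exp_add_smul]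
    simp only [Matrix.mul_assoc]
  refine ⟨S * exp ((1 / 4 : ℝ) • X), (1 / 2 : ℝ) • X, hS.mul (isUnit_exp _),
    IsSelfAdjoint.smul (.all _) hX, ?_, ?_, ?_⟩
  · rw [← neg_smul, hconj]
    norm_num
  · rw [hconj]
    norm_num
  · have hconj_zero := hconj 0
    rw [zero_smul, NormedSpace.exp_zero] at hconj_zero
    rw [gmean_mul_conjTranspose_mul_exp_mul hS hX, hconj_zero]
    norm_num

end RiemannianDistance

/-- The semiparallelogram law for `δ` with midpoint `M = A # B`:
`δ²(A,B) + 4δ²(C,M) ≤ 2δ²(C,A) + 2δ²(C,B)`. -/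
theorem rdist_semiparallelogram {m : ℕ} (A B C : Matrix (Fin m) (Fin m) ℂ)
    (hA : A.PosDef) (hB : B.PosDef) (hC : C.PosDef) :
    rdist A B ^ 2 + 4 * rdist C (gmean A B) ^ 2 ≤
      2 * rdist C A ^ 2 + 2 * rdist C B ^ 2 := by
  obtain ⟨T, K, hT, hK, rfl, rfl, hmean⟩ := exists_mul_exp_neg_eq_and_mul_exp_eq_and_eq_gmean hA hB
  obtain ⟨L, hL, rfl⟩ := exists_isHermitian_mul_exp_mul_conjTranspose_eq hT hC
  have hexpL := posDef_exp hL
  have hexpK := posDef_exp hK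
  have hexp_neg := posDef_exp hK.neg
  rw [← hmean, rdist_mul_mul_conjTranspose hT hexp_neg hexpK,
    rdist_mul_mul_conjTranspose hT hexpL PosDef.one, rdist_mul_mul_conjTranspose hT hexpL hexp_neg,
    rdist_mul_mul_conjTranspose hT hexpL hexpK]
  exact rdist_semiparallelogram_exp hK hL
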